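/- Let 0 ≤ μ ≤ 1/3 and set θ = −(1/4)(√(5μ+1) + √(1−3μ)). Then the tuple γ0 = θ/2 + √(μ+θ²)/2, γ1 = √(1−3μ)/2 − (3μ − θ√(1−3μ))/(2√(μ+θ²)), γ2 = −(3/4)√(1−3μ) + (1/4)√(5μ+1), γ3 = √(1−3μ)/2 + (3μ − θ√(1−3μ))/(2√(μ+θ²)), γ4 = θ/2 − √(μ+θ²)/2 is a solution of the system S2(μ, 0). -/

import Mathlib

/-- The `k = δ = 2` reduced system `S2(μ,η)` for `(γ0, γ1, γ2, γ3, γ4)`. -/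
def S2 (μ η γ0 γ1 γ2 γ3 γ4 : ℝ) : Prop :=
  2 * γ0 * γ4 = -μ / 2 ∧
  2 * γ0 * γ3 + 2 * γ1 * γ4 = (1 / 2) * η * μ + 3 * μ ∧
  2 * γ0 * γ2 + 2 * γ1 * γ3 + 2 * γ2 * γ4 = -3 * η * μ - (11 / 2) * μ + 1 / 2 ∧
  2 * γ0 * γ1 + 2 * γ1 * γ2 + 2 * γ2 * γ3 + 2 * γ3 * γ4
    = (11 / 2) * η * μ - 2 * η + 3 * μ - 2 ∧
  γ0 ^ 2 + γ1 ^ 2 + γ2 ^ 2 + γ3 ^ 2 + γ4 ^ 2 = -3 * η * μ + 2 * η + 3 / 2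

/-!
Put `P(z) = ∑ γₖ zᵏ`. For every `η`, the system `S2 μ η` prescribes the values `P(1) = 0`,
`P(-1)² = 4(1 + η)(1 - 3μ)` and `|P(i)|² = 5μ + 1 + 2η`, together with its first two equations.
For `η = 0`, write `a = γ1 + γ3`, `θ = γ0 + γ4`, `s = γ0 - γ4` and look for a solution with
`γ3 - γ1 = 2s`. Then `a² = 1 - 3μ`, `s² = μ + θ²`, and everything else collapses to the single
quadratic equation `2θ² + aθ = μ`, that is `(4θ + a)² = 5μ + 1`.
-/

namespace S2

theorem iff_eval_roots_of_unity {μ η γ0 γ1 γ2 γ3 γ4 : ℝ} :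
    S2 μ η γ0 γ1 γ2 γ3 γ4 ↔
      γ0 + γ1 + γ2 + γ3 + γ4 = 0 ∧
      (γ0 - γ1 + γ2 - γ3 + γ4) ^ 2 = 4 * (1 + η) * (1 - 3 * μ) ∧
      (γ0 - γ2 + γ4) ^ 2 + (γ1 - γ3) ^ 2 = 5 * μ + 1 + 2 * η ∧
      2 * γ0 * γ4 = -μ / 2 ∧
      2 * γ0 * γ3 + 2 * γ1 * γ4 = (1 / 2) * η * μ + 3 * μ := by
  constructor
  · rintro ⟨h4, h3, h2, h1, h0⟩
    refine ⟨pow_eq_zero_iff two_ne_zero |>.mp ?_, ?_, ?_, h4, h3⟩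
    · linear_combination h0 + h1 + h2 + h3 + h4
    · linear_combination h0 - h1 + h2 - h3 + h4
    · linear_combination h0 - h2 + h4
  · rintro ⟨eval_one, eval_neg_one, eval_I, h4, h3⟩
    have eval_one_sq : (γ0 + γ1 + γ2 + γ3 + γ4) ^ 2 = 0 := by rw [eval_one, zero_pow two_ne_zero]
    refine ⟨h4, h3, ?_, ?_, ?_⟩
    · linear_combination (1 / 4) * eval_one_sq + (1 / 4) * eval_neg_one - (1 / 2) * eval_I
    · linear_combination (1 / 2) * eval_one_sq - (1 / 2) * eval_neg_one - h3
    · linear_combination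
        (1 / 4) * eval_one_sq + (1 / 4) * eval_neg_one + (1 / 2) * eval_I - h4

theorem of_quadratic_eq {μ a θ s : ℝ} (ha : a ^ 2 = 1 - 3 * μ) (hθ : 2 * θ ^ 2 + a * θ = μ)
    (hs : s ^ 2 = μ + θ ^ 2) :
    S2 μ 0 (θ / 2 + s / 2) (a / 2 - s) (-a - θ) (a / 2 + s) (θ / 2 - s / 2) := by
  refine iff_eval_roots_of_unity.mpr ⟨by ring, ?_, ?_, ?_, ?_⟩
  · linear_combination 4 * ha
  · linear_combination ha + 4 * hθ + 4 * hs
  · linear_combination (-1 / 2) * hs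
  · linear_combination hθ + 2 * hs

theorem div_two_mul_eq_of_quadratic_eq {μ a θ s : ℝ} (hθ : 2 * θ ^ 2 + a * θ = μ)
    (hs : s ^ 2 = μ + θ ^ 2) (hs0 : s ≠ 0) : (3 * μ - θ * a) / (2 * s) = s := by
  rw [div_eq_iff (mul_ne_zero two_ne_zero hs0)]
  linear_combination -hθ - 2 * hs

/-- The number `θ` of the explicit solution, a root of `2x² + √(1 - 3μ) x = μ`; it is the value
of `γ0 + γ4`. -/
noncomputable def theta (μ : ℝ) : ℝ := -(1 / 4) * (√(5 * μ + 1) + √(1 - 3 * μ))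

theorem theta_quadratic_eq {μ : ℝ} (hμ0 : -(1 / 5) ≤ μ) (hμ1 : μ ≤ 1 / 3) :
    2 * theta μ ^ 2 + √(1 - 3 * μ) * theta μ = μ := by
  have ha : √(1 - 3 * μ) ^ 2 = 1 - 3 * μ := Real.sq_sqrt (by linarith)
  have hb : √(5 * μ + 1) ^ 2 = 5 * μ + 1 := Real.sq_sqrt (by linarith)
  rw [theta]
  linear_combination (1 / 8) * hb - (1 / 8) * ha

theorem add_theta_sq_eq {μ : ℝ} (hμ0 : -(1 / 5) ≤ μ) (hμ1 : μ ≤ 1 / 3) :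
    μ + theta μ ^ 2 =
      (√(5 * μ + 1) + √(1 - 3 * μ)) * (3 * √(5 * μ + 1) - √(1 - 3 * μ)) / 16 := by
  have ha : √(1 - 3 * μ) ^ 2 = 1 - 3 * μ := Real.sq_sqrt (by linarith)
  have hb : √(5 * μ + 1) ^ 2 = 5 * μ + 1 := Real.sq_sqrt (by linarith)
  rw [theta]
  linear_combination (1 / 8) * ha - (1 / 8) * hb

theorem add_theta_sq_pos {μ : ℝ} (hμ0 : -(1 / 6) < μ) (hμ1 : μ ≤ 1 / 3) :
    0 < μ + theta μ ^ 2 := by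
  have hb : 0 < √(5 * μ + 1) := Real.sqrt_pos.mpr (by linarith)
  have hab : √(1 - 3 * μ) < 3 * √(5 * μ + 1) := by
    rw [Real.sqrt_lt' (by positivity), mul_pow, Real.sq_sqrt (by linarith)]
    linarith
  rw [add_theta_sq_eq (by linarith) hμ1]
  have := sub_pos.mpr hab
  positivity

end S2

-- At `μ = -1/6` the square root `√(μ + θ²)` in the denominators vanishes.
open S2 in
theorem explicit_solution_S2_general {μ : ℝ} (hμ0 : -(1 / 6) < μ) (hμ1 : μ ≤ 1 / 3) :
    S2 μ 0
      (theta μ / 2 + √(μ + theta μ ^ 2) / 2)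
      (√(1 - 3 * μ) / 2 - (3 * μ - theta μ * √(1 - 3 * μ)) / (2 * √(μ + theta μ ^ 2)))
      (-(3 / 4) * √(1 - 3 * μ) + (1 / 4) * √(5 * μ + 1))
      (√(1 - 3 * μ) / 2 + (3 * μ - theta μ * √(1 - 3 * μ)) / (2 * √(μ + theta μ ^ 2)))
      (theta μ / 2 - √(μ + theta μ ^ 2) / 2) := by
  have ha : √(1 - 3 * μ) ^ 2 = 1 - 3 * μ := Real.sq_sqrt (by linarith)
  have hθ := theta_quadratic_eq (by linarith) hμ1
  have hpos := add_theta_sq_pos hμ0 hμ1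
  have hs : √(μ + theta μ ^ 2) ^ 2 = μ + theta μ ^ 2 := Real.sq_sqrt hpos.le
  have hγ2 : -(3 / 4) * √(1 - 3 * μ) + (1 / 4) * √(5 * μ + 1) = -√(1 - 3 * μ) - theta μ := by
    rw [theta]
    ring
  rw [div_two_mul_eq_of_quadratic_eq hθ hs (Real.sqrt_ne_zero'.mpr hpos), hγ2]
  exact of_quadratic_eq ha hθ hs

/-- **Explicit solution of `S2(μ,0)` for `0 ≤ μ ≤ 1/3`**, with
`θ = -(1/4)(√(5μ+1) + √(1-3μ))`. -/
theorem explicit_solution_S2 (μ : ℝ) (hμ0 : 0 ≤ μ) (hμ1 : μ ≤ 1 / 3) :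
    let θ : ℝ := -(1 / 4) * (Real.sqrt (5 * μ + 1) + Real.sqrt (1 - 3 * μ))
    S2 μ 0
      (θ / 2 + Real.sqrt (μ + θ ^ 2) / 2)
      (Real.sqrt (1 - 3 * μ) / 2
        - (3 * μ - θ * Real.sqrt (1 - 3 * μ)) / (2 * Real.sqrt (μ + θ ^ 2)))
      (-(3 / 4) * Real.sqrt (1 - 3 * μ) + (1 / 4) * Real.sqrt (5 * μ + 1))
      (Real.sqrt (1 - 3 * μ) / 2
        + (3 * μ - θ * Real.sqrt (1 - 3 * μ)) / (2 * Real.sqrt (μ + θ ^ 2)))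
      (θ / 2 - Real.sqrt (μ + θ ^ 2) / 2) :=
  explicit_solution_S2_general (by linarith) hμ1
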